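/- arXiv:1209.3577 — 3 statements merged into one kernel-verified Lean document; each statement's English description precedes it below -/
import Mathlib

section
/- For every positive integer k and every real number x ≥ 1, one has ∑_{n ≤ x} k (1 − n/x)^{k−1} = φ_k(x), where the sum is over positive integers n ≤ x; equivalently, φ_k(x) = k x^{1−k} ∑_{n ≤ x} (x − n)^{k−1}. -/
/-- The `k`-th Bernoulli polynomial, evaluated at a real number. -/
noncomputable def bernPoly (k : ℕ) (x : ℝ) : ℝ :=
  Polynomial.aeval x (Polynomial.bernoulli k)

/-- `B_k(x) = b_k({x})`, the periodized Bernoulli polynomial. -/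
noncomputable def bernPer (k : ℕ) (x : ℝ) : ℝ := bernPoly k (Int.fract x)

/-- `φ_k(x) = (b_k(x) - B_k(x)) / x^(k-1)`. -/
noncomputable def phiFun (k : ℕ) (x : ℝ) : ℝ := (bernPoly k x - bernPer k x) / x ^ (k - 1)

theorem bernPoly_one_add (k : ℕ) (y : ℝ) :
    bernPoly k (1 + y) = bernPoly k y + k * y ^ (k - 1) := by
  have h := congrArg (Polynomial.aeval y) (Polynomial.bernoulli_comp_one_add_X k)
  simpa [bernPoly, Polynomial.aeval_comp] using h

theorem bernPoly_sub_sum (k N : ℕ) (x : ℝ) :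
    bernPoly k x - bernPoly k (x - N) = k * ∑ n ∈ Finset.Icc 1 N, (x - n) ^ (k - 1) := by
  induction N with
  | zero => simp
  | succ N ih =>
    rw [Finset.sum_Icc_succ_top (by omega), mul_add, ← ih]
    have h := bernPoly_one_add k (x - (N + 1 : ℕ))
    have e : 1 + (x - (N + 1 : ℕ)) = x - N := by push_cast; ring
    rw [e] at h
    rw [h]; ring

/-- For every positive integer `k` and real `x ≥ 1`,
`∑_{n ≤ x} k (1 - n/x)^(k-1) = φ_k(x)`; equivalently
`φ_k(x) = k x^(1-k) ∑_{n ≤ x} (x - n)^(k-1)`. -/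
theorem phi_eq_sum (k : ℕ) (hk : 1 ≤ k) (x : ℝ) (hx : 1 ≤ x) :
    (∑ n ∈ Finset.Icc 1 ⌊x⌋₊, (k : ℝ) * (1 - n / x) ^ (k - 1) = phiFun k x) ∧
    phiFun k x = k * x ^ ((1 : ℤ) - k) * ∑ n ∈ Finset.Icc 1 ⌊x⌋₊, (x - n) ^ (k - 1) := by
  have hx0 : x ≠ 0 := by positivity
  have hf : Int.fract x = x - (⌊x⌋₊ : ℕ) := by
    rw [← Int.self_sub_floor, natCast_floor_eq_intCast_floor (by positivity)]
  have h2 : phiFun k x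
      = k * x ^ ((1 : ℤ) - k) * ∑ n ∈ Finset.Icc 1 ⌊x⌋₊, (x - n) ^ (k - 1) := by
    have hz : x ^ ((1 : ℤ) - k) = (x ^ (k - 1))⁻¹ := by
      rw [← zpow_natCast, ← zpow_neg]
      congr 1
      omega
    rw [phiFun, bernPer, hf, bernPoly_sub_sum, hz]
    ring
  refine ⟨?_, h2⟩
  rw [phiFun, bernPer, hf, bernPoly_sub_sum, Finset.mul_sum, Finset.sum_div]
  refine Finset.sum_congr rfl fun n _ => ?_
  rw [mul_div_assoc, ← div_pow, sub_div, div_self hx0]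
end

section
/- For every real number x ≥ 1, one has |m₁(x)| ≤ x^{−2} ∫_1^x |M(t)| dt + 8/(3x). -/
/-- `M(x) = ∑_{n ≤ x} μ(n)`. -/
noncomputable def Mobius_M (x : ℝ) : ℝ :=
  ∑ n ∈ Finset.Icc 1 ⌊x⌋₊, (ArithmeticFunction.moebius n : ℝ)

/-- `m₁(x) = ∑_{n ≤ x} μ(n) (1/n - 1/x)`. -/
noncomputable def Mobius_m1 (x : ℝ) : ℝ :=
  ∑ n ∈ Finset.Icc 1 ⌊x⌋₊, (ArithmeticFunction.moebius n : ℝ) * (1 / n - 1 / x)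

open MeasureTheory Finset
theorem mob_sum (X : ℕ) (hX : 1 ≤ X) (H : ℕ → ℝ) :
    ∑ n ∈ Finset.Icc 1 X, ∑ k ∈ Finset.Icc 1 X,
      (if n * k ≤ X then (ArithmeticFunction.moebius n : ℝ) * H (n * k) else 0) = H 1 := by
  have h1 : ∀ m ∈ Finset.Icc 1 X, ∑ p ∈ m.divisorsAntidiagonal, (ArithmeticFunction.moebius p.1 : ℝ) * H (p.1 * p.2)
      = if m = 1 then H 1 else 0 := by
    intro m hm
    have h2 : ∑ p ∈ m.divisorsAntidiagonal, (ArithmeticFunction.moebius p.1 : ℝ) * H (p.1 * p.2)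
      = ((∑ p ∈ m.divisorsAntidiagonal, ArithmeticFunction.moebius p.1 : ℤ) : ℝ) * H m := by
      push_cast
      rw [Finset.sum_mul]
      refine Finset.sum_congr rfl fun p hp => ?_
      rw [(Nat.mem_divisorsAntidiagonal.1 hp).1]
    rw [h2, Nat.sum_divisorsAntidiagonal (fun i _ => ArithmeticFunction.moebius i),
      ← ArithmeticFunction.coe_mul_zeta_apply, ArithmeticFunction.moebius_mul_coe_zeta,
      ArithmeticFunction.one_apply]
    split_ifs with h <;> simp [h]
  have h3 : ∑ m ∈ Finset.Icc 1 X, ∑ p ∈ m.divisorsAntidiagonal, (ArithmeticFunction.moebius p.1 : ℝ) * H (p.1 * p.2) = H 1 := by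
    rw [Finset.sum_congr rfl h1]
    simp [hX]
  rw [← h3, ← Finset.sum_product', ← Finset.sum_filter, Finset.sum_sigma']
  refine Finset.sum_bij' (fun p _ => (⟨p.1 * p.2, p⟩ : (_ : ℕ) × (ℕ × ℕ))) (fun q _ => q.2) ?_ ?_ ?_ ?_ ?_
  · rintro ⟨a, b⟩ h
    simp only [Finset.mem_filter, Finset.mem_product, Finset.mem_Icc, Finset.mem_sigma, Nat.mem_divisorsAntidiagonal] at h ⊢
    have : 0 < a * b := Nat.mul_pos (by omega) (by omega)
    refine ⟨⟨this, h.2⟩, trivial, by omega⟩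
  · rintro ⟨m, a, b⟩ h
    simp only [Finset.mem_filter, Finset.mem_product, Finset.mem_Icc, Finset.mem_sigma, Nat.mem_divisorsAntidiagonal] at h ⊢
    obtain ⟨⟨h1, h2⟩, h3, h4⟩ := h
    have ha : 0 < a := Nat.pos_of_ne_zero (by rintro rfl; simp at h3; omega)
    have hb : 0 < b := Nat.pos_of_ne_zero (by rintro rfl; simp at h3; omega)
    have := Nat.le_mul_of_pos_right a hb
    have := Nat.le_mul_of_pos_left b ha
    refine ⟨⟨⟨?_, ?_⟩, ?_, ?_⟩, ?_⟩ <;> omega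
  · simp
  · rintro ⟨m, a, b⟩ h
    simp only [Finset.mem_sigma, Nat.mem_divisorsAntidiagonal] at h
    obtain ⟨_, h3, _⟩ := h
    subst h3; rfl
  · simp

theorem sums (N : ℕ) (a b : ℝ) : ∑ k ∈ Finset.Icc 1 N, (4 * (k:ℝ) * a - 4 * (k:ℝ)^3 * b) =
    2 * ((N:ℝ) * (N+1)) * a - ((N:ℝ) * (N+1))^2 * b := by
  induction N with
  | zero => simp
  | succ n ih => rw [Finset.sum_Icc_succ_top (by omega), ih]; push_cast; ring

theorem int_ind (x a b : ℝ) (f : ℝ → ℝ) (ha : 1 ≤ a) (hb : b ≤ x) (hf : ContinuousOn f (Set.Icc 1 x)) :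
    IntegrableOn ((Set.Icc a b).indicator f) (Set.Icc 1 x) ∧
    ∫ t in Set.Icc 1 x, (Set.Icc a b).indicator f t = if a ≤ b then ∫ t in a..b, f t else 0 := by
  constructor
  · exact (hf.integrableOn_Icc).indicator measurableSet_Icc
  · rw [setIntegral_indicator measurableSet_Icc, Set.inter_eq_right.2 (Set.Icc_subset_Icc ha hb)]
    split_ifs with h
    · rw [integral_Icc_eq_integral_Ioc, intervalIntegral.integral_of_le h]
    · rw [Set.Icc_eq_empty h]; simp

theorem kern (x t : ℝ) (ht : 1 ≤ t) (htx : t ≤ x) :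
    |x / t^2 - ∑ k ∈ Finset.Icc 1 ⌊x⌋₊, (Set.Icc 1 (x / k)).indicator (fun t => 4 * (k:ℝ) * (1/x) - 4 * (k:ℝ)^3 * (t^2/x^3)) t| ≤ 1 / x := by
  have hx : 0 < x := by linarith
  have ht0 : 0 < t := by linarith
  have h1 : ∑ k ∈ Finset.Icc 1 ⌊x⌋₊, (Set.Icc 1 (x / k)).indicator (fun t => 4 * (k:ℝ) * (1/x) - 4 * (k:ℝ)^3 * (t^2/x^3)) t
    = ∑ k ∈ Finset.Icc 1 ⌊x/t⌋₊, (4 * (k:ℝ) * (1/x) - 4 * (k:ℝ)^3 * (t^2/x^3)) := by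
    simp only [Set.indicator_apply]
    rw [← Finset.sum_filter]
    refine Finset.sum_congr ?_ fun _ _ => rfl
    ext k
    simp only [Finset.mem_filter, Finset.mem_Icc, Set.mem_Icc]
    rw [Nat.le_floor_iff hx.le, Nat.le_floor_iff (by positivity)]
    constructor
    · rintro ⟨⟨h1, h2⟩, h3, h4⟩
      have : (0:ℝ) < k := by exact_mod_cast h1
      rw [le_div_iff₀ this] at h4
      refine ⟨h1, ?_⟩
      rw [le_div_iff₀ ht0]; linarith
    · rintro ⟨h1, h2⟩
      have : (0:ℝ) < k := by exact_mod_cast h1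
      rw [le_div_iff₀ ht0] at h2
      refine ⟨⟨h1, by nlinarith⟩, ht, ?_⟩
      rw [le_div_iff₀ this]; linarith
  rw [h1, sums]
  have hN1 : (⌊x/t⌋₊:ℝ) ≤ x / t := Nat.floor_le (by positivity)
  have hN2 : x / t < (⌊x/t⌋₊:ℝ) + 1 := Nat.lt_floor_add_one _
  have hN0 : (0:ℝ) ≤ (⌊x/t⌋₊:ℝ) := Nat.cast_nonneg _
  generalize (⌊x/t⌋₊:ℝ) = N at *
  obtain ⟨u, hu⟩ : ∃ u, u = x / t := ⟨_, rfl⟩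
  rw [← hu] at hN1 hN2
  have hu1 : 0 < u := by rw [hu]; positivity
  have hxu : x = u * t := by rw [hu]; field_simp
  have hT : |u^2 - N*(N+1)| ≤ u := by
    rw [abs_le]; constructor <;> nlinarith [mul_nonneg hN0 hu1.le, mul_nonneg hu1.le (sub_nonneg.2 hN2.le), mul_nonneg hN0 (sub_nonneg.2 hN2.le), mul_nonneg hN0 (sub_nonneg.2 hN1), mul_nonneg hu1.le (sub_nonneg.2 hN1)]
  have e : x / t^2 - (2 * (N * (N+1)) * (1/x) - (N * (N+1))^2 * (t^2/x^3)) = (u^2 - N*(N+1))^2 / (u^3 * t) := by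
    rw [hxu]; field_simp; ring
  rw [e, abs_of_nonneg (by positivity), hxu, div_le_div_iff₀ (by positivity) (by positivity)]
  have : (u^2 - N*(N+1))^2 ≤ u^2 := sq_le_sq' (by linarith [(abs_le.1 hT).1]) (abs_le.1 hT).2
  have : (u^2 - N*(N+1))^2 * (u*t) ≤ u^2 * (u*t) := by gcongr
  linarith

theorem M_ind (x t : ℝ) (ht : 1 ≤ t) (htx : t ≤ x) : Mobius_M t =
    ∑ n ∈ Finset.Icc 1 ⌊x⌋₊, (Set.Icc (n:ℝ) x).indicator (fun _ => (ArithmeticFunction.moebius n : ℝ)) t := by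
  simp only [Set.indicator_apply, Mobius_M]
  rw [← Finset.sum_filter]
  refine Finset.sum_congr ?_ fun _ _ => rfl
  ext k
  simp only [Finset.mem_filter, Finset.mem_Icc, Set.mem_Icc]
  rw [Nat.le_floor_iff (by linarith), Nat.le_floor_iff (by linarith)]
  constructor
  · rintro ⟨h1, h2⟩
    exact ⟨⟨h1, by linarith⟩, h2, htx⟩
  · rintro ⟨⟨h1, h2⟩, h3, h4⟩
    exact ⟨h1, h3⟩

theorem h_int (x a k : ℝ) (ha : 1 ≤ a) (hk : 1 ≤ k) (hx : 1 ≤ x) :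
    ∫ t in a..(x/k), (4 * k * (1/x) - 4 * k^3 * (t^2/x^3)) =
      8/3 - 4 * (a * k / x) + 4/3 * (a * k/x)^3 := by
  rw [intervalIntegral.integral_sub (by apply Continuous.intervalIntegrable; fun_prop) (by apply Continuous.intervalIntegrable; fun_prop)]
  rw [intervalIntegral.integral_const, intervalIntegral.integral_const_mul, intervalIntegral.integral_div, integral_pow]
  simp only [smul_eq_mul]
  push_cast
  field_simp
  ring

theorem m_int (x a : ℝ) (ha : 1 ≤ a) (hx : a ≤ x) :
    ∫ t in a..x, x / t^2 = x * (1 / a - 1 / x) := by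
  have : ∀ t ∈ Set.uIcc a x, HasDerivAt (fun t => - x / t) (x / t^2) t := by
    intro t ht
    rw [Set.uIcc_of_le hx] at ht
    have : t ≠ 0 := by linarith [ht.1]
    have h := (hasDerivAt_inv this).const_mul (-x)
    refine (h.congr_deriv (by field_simp)).congr_of_eventuallyEq ?_
    exact Filter.Eventually.of_forall fun t => by simp [div_eq_mul_inv]
  rw [intervalIntegral.integral_eq_sub_of_hasDerivAt this]
  · ring
  · apply ContinuousOn.intervalIntegrable
    rw [Set.uIcc_of_le hx]
    refine continuousOn_const.div (by fun_prop) fun t ht => ?_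
    have : t ≠ 0 := by linarith [ht.1]
    positivity

/-- For every real `x ≥ 1`, `|m₁(x)| ≤ x⁻² ∫_1^x |M(t)| dt + 8/(3x)`. -/
theorem m1_bound' (x : ℝ) (hx : 1 ≤ x) :
    |Mobius_m1 x| ≤ (1 / x ^ 2) * (∫ t in (1 : ℝ)..x, |Mobius_M t|) + 8 / (3 * x) := by
  have hx0 : 0 < x := by linarith
  have hX : 1 ≤ ⌊x⌋₊ := Nat.le_floor (by simpa using hx)
  let μ : ℕ → ℝ := fun n => (ArithmeticFunction.moebius n : ℝ)
  let p : ℕ → ℝ → ℝ := fun k t => 4 * (k:ℝ) * (1/x) - 4 * (k:ℝ)^3 * (t^2/x^3)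
  let A : ℝ → ℝ := fun t => ∑ k ∈ Finset.Icc 1 ⌊x⌋₊, (Set.Icc 1 (x / k)).indicator (p k) t
  let H : ℕ → ℝ := fun m => 8/3 - 4 * (m / x) + 4/3 * (m / x)^3
  have hmem : ∀ n ∈ Finset.Icc 1 ⌊x⌋₊, (1:ℝ) ≤ n ∧ (n:ℝ) ≤ x := by
    intro n hn
    rw [Finset.mem_Icc, Nat.le_floor_iff hx0.le] at hn
    exact ⟨by exact_mod_cast hn.1, hn.2⟩
  have hdiv : ∀ n ∈ Finset.Icc 1 ⌊x⌋₊, x / (n:ℝ) ≤ x := fun n hn => div_le_self hx0.le (hmem n hn).1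
  have hc1 : ContinuousOn (fun t : ℝ => x / t^2) (Set.Icc 1 x) := by
    refine continuousOn_const.div (by fun_prop) fun t ht => ?_
    have : t ≠ 0 := by linarith [ht.1]
    positivity
  have hcp : ∀ k, ContinuousOn (p k) (Set.Icc 1 x) := fun k => by
    apply Continuous.continuousOn; fun_prop
  have e1 : ∀ t ∈ Set.Icc 1 x, Mobius_M t * (x / t^2) =
      ∑ n ∈ Finset.Icc 1 ⌊x⌋₊, μ n * (Set.Icc (n:ℝ) x).indicator (fun t => x / t^2) t := by
    intro t ht
    rw [M_ind x t ht.1 ht.2, Finset.sum_mul]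
    refine Finset.sum_congr rfl fun n _ => ?_
    simp only [Set.indicator_apply]
    split_ifs <;> simp [μ]
  have e2 : ∀ t ∈ Set.Icc 1 x, Mobius_M t * A t =
      ∑ n ∈ Finset.Icc 1 ⌊x⌋₊, ∑ k ∈ Finset.Icc 1 ⌊x⌋₊,
        μ n * (Set.Icc (n:ℝ) (x/k)).indicator (p k) t := by
    intro t ht
    rw [M_ind x t ht.1 ht.2, Finset.sum_mul]
    refine Finset.sum_congr rfl fun n hn => ?_
    rw [Finset.mul_sum]
    refine Finset.sum_congr rfl fun k hk => ?_
    have h1 := hmem n hn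
    have h2 := hdiv k hk
    have h3 : (t ∈ Set.Icc (n:ℝ) x ∧ t ∈ Set.Icc 1 (x/k)) ↔ t ∈ Set.Icc (n:ℝ) (x/k) := by
      simp only [Set.mem_Icc]
      constructor
      · rintro ⟨⟨a, b⟩, c, d⟩; exact ⟨a, d⟩
      · rintro ⟨a, b⟩; exact ⟨⟨a, ht.2⟩, ht.1, b⟩
    simp only [Set.indicator_apply]
    rw [← if_congr h3 rfl rfl]
    by_cases a : t ∈ Set.Icc (n:ℝ) x <;> by_cases b : t ∈ Set.Icc 1 (x/k) <;> simp [a, b, μ]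
  have i1 : ∫ t in Set.Icc 1 x, Mobius_M t * (x / t^2) = x * Mobius_m1 x := by
    rw [setIntegral_congr_fun measurableSet_Icc e1, integral_finsetSum _ (fun (n : ℕ) hn =>
      (int_ind x n x _ (hmem n hn).1 le_rfl hc1).1.const_mul _), Mobius_m1, Finset.mul_sum]
    refine Finset.sum_congr rfl fun n hn => ?_
    rw [integral_const_mul, (int_ind x n x _ (hmem n hn).1 le_rfl hc1).2, if_pos (hmem n hn).2,
      m_int _ _ (hmem n hn).1 (hmem n hn).2]
    simp only [μ]; ring
  have g1 : IntegrableOn (fun t => Mobius_M t * (x / t^2)) (Set.Icc 1 x) := by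
    refine IntegrableOn.congr_fun ?_ (fun t ht => (e1 t ht).symm) measurableSet_Icc
    exact integrable_finsetSum _ (fun (n : ℕ) hn => (int_ind x n x _ (hmem n hn).1 le_rfl hc1).1.const_mul _)
  have g2 : IntegrableOn (fun t => Mobius_M t * A t) (Set.Icc 1 x) := by
    refine IntegrableOn.congr_fun ?_ (fun t ht => (e2 t ht).symm) measurableSet_Icc
    exact integrable_finsetSum _ (fun (n : ℕ) hn => integrable_finsetSum _ fun (k : ℕ) hk =>
      (int_ind x n (x/k) _ (hmem n hn).1 (hdiv k hk) (hcp k)).1.const_mul _)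
  have i2 : ∫ t in Set.Icc 1 x, Mobius_M t * A t = H 1 := by
    rw [setIntegral_congr_fun measurableSet_Icc e2, integral_finsetSum _ (fun (n : ℕ) hn =>
      integrable_finsetSum _ fun (k : ℕ) hk =>
      (int_ind x n (x/k) _ (hmem n hn).1 (hdiv k hk) (hcp k)).1.const_mul _),
      ← mob_sum ⌊x⌋₊ hX H]
    refine Finset.sum_congr rfl fun n hn => ?_
    rw [integral_finsetSum _ fun (k : ℕ) hk =>
      (int_ind x n (x/k) _ (hmem n hn).1 (hdiv k hk) (hcp k)).1.const_mul _]
    refine Finset.sum_congr rfl fun k hk => ?_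
    rw [integral_const_mul, (int_ind x n (x/k) _ (hmem n hn).1 (hdiv k hk) (hcp k)).2]
    have hk0 : (0:ℝ) < k := by linarith [(hmem k hk).1]
    have hiff : ((n:ℝ) ≤ x / k) ↔ n * k ≤ ⌊x⌋₊ := by
      rw [le_div_iff₀ hk0, Nat.le_floor_iff hx0.le]; push_cast; rfl
    rw [if_congr hiff rfl rfl]
    split_ifs
    · rw [h_int x n k (hmem n hn).1 (hmem k hk).1 hx]
      simp only [H, μ]; push_cast; rfl
    · simp
  have g3 : IntegrableOn (fun t => Mobius_M t) (Set.Icc 1 x) := by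
    refine IntegrableOn.congr_fun ?_ (fun t ht => (M_ind x t ht.1 ht.2).symm) measurableSet_Icc
    exact integrable_finsetSum _ (fun (n : ℕ) hn => (int_ind x (n:ℕ) x _ (hmem n hn).1 le_rfl continuousOn_const).1)
  have key : |x * Mobius_m1 x - H 1| ≤ (1/x) * ∫ t in (1:ℝ)..x, |Mobius_M t| := by
    rw [← i1, ← i2, ← integral_sub g1 g2, intervalIntegral.integral_of_le hx,
      ← integral_Icc_eq_integral_Ioc, ← integral_const_mul, ← Real.norm_eq_abs]
    refine norm_integral_le_of_norm_le (g3.abs.const_mul _) ?_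
    refine (ae_restrict_iff' measurableSet_Icc).2 (Filter.Eventually.of_forall fun t ht => ?_)
    rw [← mul_sub, Real.norm_eq_abs, abs_mul, mul_comm]
    exact mul_le_mul_of_nonneg_right (kern x t ht.1 ht.2) (abs_nonneg _)
  have hH : |H 1| ≤ 8/3 := by
    have h1 : 1 / x ≤ 1 := by rw [div_le_one hx0]; exact hx
    have h0 : 0 ≤ 1 / x := by positivity
    have hH1 : H 1 = 8/3 - 4 * (1/x) + 4/3 * (1/x)^3 := by simp [H]
    rw [hH1]
    generalize 1 / x = y at *
    rw [abs_le]
    constructor <;> nlinarith [mul_nonneg h0 (sub_nonneg.2 h1), mul_nonneg h0 (mul_nonneg h0 (sub_nonneg.2 h1)), pow_nonneg h0 3]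
  have h5 : x * |Mobius_m1 x| ≤ (1/x) * (∫ t in (1:ℝ)..x, |Mobius_M t|) + 8/3 := by
    rw [← abs_of_pos hx0, ← abs_mul, abs_of_pos hx0]
    have := abs_add_le (x * Mobius_m1 x - H 1) (H 1)
    rw [sub_add_cancel] at this
    linarith
  rw [← mul_le_mul_iff_right₀ hx0]
  refine h5.trans (le_of_eq ?_)
  field_simp
end

section
/- For every real number x ≥ 1, one has | −1 + ∫_1^x m(t)/t dt | ≤ 1/x + (1/x) ∫_1^x |M(t)|/t dt. -/
/-- `m(x) = ∑_{n ≤ x} μ(n)/n`. -/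
noncomputable def Mobius_m (x : ℝ) : ℝ :=
  ∑ n ∈ Finset.Icc 1 ⌊x⌋₊, (ArithmeticFunction.moebius n : ℝ) / n

open MeasureTheory

lemma aux_log_upper (n : ℕ) (hn : 1 ≤ n) :
    Real.log (n + 1) - Real.log n ≤ (1 / (n:ℝ) + 1 / (n + 1)) / 2 := by
  have h0 : (0:ℝ) < n := by exact_mod_cast hn
  have hu : (1:ℝ) ≤ (n + 1) / n := by rw [le_div_iff₀ h0]; linarith
  have h := Real.self_le_sinh_iff.2 (Real.log_nonneg hu)
  rw [Real.sinh_log (by linarith), Real.log_div (by positivity) h0.ne'] at h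
  refine h.trans (le_of_eq ?_)
  field_simp
  ring

lemma aux_log_lower (n : ℕ) (hn : 1 ≤ n) :
    2 * (1 / (2 * (n:ℝ) + 1)) + 2 / 3 * (1 / (2 * (n:ℝ) + 1)) ^ 3
      ≤ Real.log (n + 1) - Real.log n := by
  have h0 : (0:ℝ) < n := by exact_mod_cast hn
  have h := sum_le_hasSum (Finset.range 2) (fun k _ => by positivity)
    (Real.hasSum_log_one_add_inv h0)
  have e : (1:ℝ) + (n:ℝ)⁻¹ = (n + 1) / n := by field_simp
  rw [e, Real.log_div (by positivity) h0.ne'] at h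
  simp only [Finset.sum_range_succ, Finset.sum_range_zero] at h
  norm_num at h ⊢
  linarith

lemma aux_tendsto_shift : Filter.Tendsto
    (fun n : ℕ => (harmonic (n+1) : ℝ) - Real.log ((n:ℝ)+1)) Filter.atTop
    (nhds Real.eulerMascheroniConstant) := by
  have := (Filter.tendsto_add_atTop_iff_nat 1).2 Real.tendsto_harmonic_sub_log
  simpa using this

lemma aux_inv_tendsto : Filter.Tendsto (fun n : ℕ => 1 / ((n:ℝ)+1)) Filter.atTop (nhds 0) :=
  tendsto_one_div_add_atTop_nhds_zero_nat

lemma aux_D_upper (n : ℕ) (hn : 1 ≤ n) :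
    (harmonic n : ℝ) - Real.log n - Real.eulerMascheroniConstant ≤ 1 / (2 * n) := by
  obtain ⟨k, rfl⟩ : ∃ k, n = k + 1 := ⟨n - 1, by omega⟩
  have hm : Monotone (fun n : ℕ => (harmonic (n+1) : ℝ) - Real.log ((n:ℝ)+1)
      - 1 / 2 * (1 / ((n:ℝ)+1))) := by
    refine monotone_nat_of_le_succ fun n => ?_
    have h := aux_log_upper (n+1) (by omega)
    rw [harmonic_succ (n+1)]
    push_cast at h ⊢
    have e : ((n:ℝ) + 1 + 1)⁻¹ = 1 / ((n:ℝ)+1+1) := by simp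
    rw [e]
    linarith
  have ht := aux_tendsto_shift.sub (aux_inv_tendsto.const_mul (1/2))
  have := hm.ge_of_tendsto ht k
  push_cast
  have e : 1 / (2 * ((k:ℝ) + 1)) = 1 / 2 * (1 / ((k:ℝ)+1)) := by field_simp
  rw [e]
  linarith

lemma aux_D_lower (n : ℕ) (hn : 1 ≤ n) :
    1 / (2 * (n:ℝ)) - 1 / (12 * (n:ℝ)^2) ≤
    (harmonic n : ℝ) - Real.log n - Real.eulerMascheroniConstant := by
  obtain ⟨k, rfl⟩ : ∃ k, n = k + 1 := ⟨n - 1, by omega⟩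
  have hm : Antitone (fun n : ℕ => (harmonic (n+1) : ℝ) - Real.log ((n:ℝ)+1)
      - 1 / 2 * (1 / ((n:ℝ)+1)) + 1 / 12 * (1 / ((n:ℝ)+1))^2) := by
    refine antitone_nat_of_succ_le fun n => ?_
    have h := aux_log_lower (n+1) (by omega)
    rw [harmonic_succ (n+1)]
    push_cast at h ⊢
    have hk : ((n:ℝ) + 1 + 1)⁻¹ - 1 / 2 * (1 / ((n:ℝ)+1+1)) + 1 / 12 * (1 / ((n:ℝ)+1+1))^2
        + 1 / 2 * (1 / ((n:ℝ)+1)) - 1 / 12 * (1 / ((n:ℝ)+1))^2 ≤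
        2 * (1 / (2 * ((n:ℝ)+1) + 1)) + 2 / 3 * (1 / (2 * ((n:ℝ)+1) + 1)) ^ 3 := by
      have h0 : (0:ℝ) ≤ n := n.cast_nonneg
      generalize (n:ℝ) = t at h0
      rw [← sub_nonneg]
      field_simp
      ring_nf
      positivity
    linarith
  have ht := (aux_tendsto_shift.sub (aux_inv_tendsto.const_mul (1/2))).add
    ((aux_inv_tendsto.pow 2).const_mul (1/12))
  have := hm.le_of_tendsto ht k
  push_cast
  have e : 1 / (2 * ((k:ℝ) + 1)) = 1 / 2 * (1 / ((k:ℝ)+1)) := by field_simp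
  have e' : 1 / (12 * ((k:ℝ) + 1)^2) = 1 / 12 * (1 / ((k:ℝ)+1))^2 := by field_simp
  rw [e, e']
  norm_num at this ⊢
  linarith

lemma aux_gamma : 0.55 ≤ Real.eulerMascheroniConstant := by
  have h := aux_D_upper 2 (by norm_num)
  have h2 := Real.log_two_lt_d9
  norm_num [harmonic, Finset.sum_range_succ] at h ⊢
  linarith

/-- the kernel -/
noncomputable def auxF (y : ℝ) : ℝ :=
  y * (Real.log y + 1 - ∑ k ∈ Finset.Icc 1 ⌊y⌋₊, 1 / (k:ℝ))
    - 2 * (1 - Real.eulerMascheroniConstant) * (∑ k ∈ Finset.Icc 1 ⌊y⌋₊, (k:ℝ)) / y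

lemma aux_sum_id (N : ℕ) : ∑ k ∈ Finset.Icc 1 N, (k:ℝ) = N * (N + 1) / 2 := by
  induction N with
  | zero => simp
  | succ n ih => rw [Finset.sum_Icc_succ_top (by omega), ih]; push_cast; ring

lemma auxF_bound (y : ℝ) (hy : 1 ≤ y) : |auxF y| ≤ 1 := by
  have hN : 1 ≤ ⌊y⌋₊ := Nat.one_le_floor_iff y |>.2 hy
  have hle : (⌊y⌋₊ : ℝ) ≤ y := Nat.floor_le (by linarith)
  have hlt : y < ⌊y⌋₊ + 1 := Nat.lt_floor_add_one y
  have hs : ∑ k ∈ Finset.Icc 1 ⌊y⌋₊, 1 / (k:ℝ) = (harmonic ⌊y⌋₊ : ℝ) := by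
    rw [harmonic_eq_sum_Icc]; push_cast; simp
  unfold auxF
  rw [hs, aux_sum_id]
  generalize ⌊y⌋₊ = N at *
  have hg := aux_gamma
  have hg2 := Real.eulerMascheroniConstant_lt_two_thirds
  have hu := aux_D_upper N hN
  have hl := aux_D_lower (N+1) (by omega)
  have hh := harmonic_le_one_add_log N
  rw [harmonic_succ] at hl
  have hN' : (1:ℝ) ≤ N := by exact_mod_cast hN
  push_cast at hl
  generalize (harmonic N : ℝ) = H at *
  generalize Real.eulerMascheroniConstant = g at *
  generalize (N:ℝ) = n at *
  have hlog1 : Real.log n ≤ Real.log y := Real.log_le_log (by linarith) hle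
  have hlog2 : Real.log y ≤ Real.log (n+1) := Real.log_le_log (by linarith) hlt.le
  have a1 : n * (Real.log n + 1 - H) ≤ y * (Real.log y + 1 - H) := by
    apply mul_le_mul hle <;> linarith
  have a2 : y * (Real.log y + 1 - H) ≤ (n+1) * (Real.log (n+1) + 1 - H) := by
    apply mul_le_mul hlt.le <;> linarith
  have b1 : 2 * (1 - g) * (n * (n+1) / 2) / y ≤ (1 - g) * (n + 1) := by
    rw [div_le_iff₀ (by linarith)]
    have : (1-g) * (n+1) * n ≤ (1-g) * (n+1) * y :=
      mul_le_mul_of_nonneg_left hle (by apply mul_nonneg <;> linarith)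
    linarith
  have b2 : (1 - g) * n ≤ 2 * (1 - g) * (n * (n+1) / 2) / y := by
    rw [le_div_iff₀ (by linarith)]
    have : (1-g) * n * y ≤ (1-g) * n * (n+1) :=
      mul_le_mul_of_nonneg_left hlt.le (by apply mul_nonneg <;> linarith)
    linarith
  have c1 : n * (H - Real.log n - g) ≤ 1 / 2 := by
    have := mul_le_mul_of_nonneg_left hu (by linarith : (0:ℝ) ≤ n)
    have e : n * (1 / (2 * n)) = 1/2 := by field_simp
    linarith
  have c2 : 1 / 2 - 1 / 24 ≤ (n+1) * (H - Real.log (n+1) - g) + 1 := by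
    have := mul_le_mul_of_nonneg_left hl (by linarith : (0:ℝ) ≤ n + 1)
    have e : (n+1) * (1 / (2 * (n+1)) - 1 / (12 * (n+1)^2)) = 1/2 - 1 / (12 * (n+1)) := by
      field_simp
    have e2 : 1 / (12 * (n+1)) ≤ 1 / 24 := by
      apply one_div_le_one_div_of_le <;> linarith
    have e3 : (n+1) * (H + (n+1)⁻¹ - Real.log (n+1) - g) =
      (n+1) * (H - Real.log (n+1) - g) + 1 := by field_simp; ring
    linarith
  rw [abs_le]
  constructor <;> linarith

lemma aux_mobius_inv (N : ℕ) (hN : 1 ≤ N) (g : ℕ → ℝ) :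
    ∑ n ∈ Finset.Icc 1 N, (ArithmeticFunction.moebius n : ℝ) *
      ∑ k ∈ Finset.Icc 1 (N / n), g (n * k) = g 1 := by
  have h1 : ∀ n ∈ Finset.Icc 1 N, (ArithmeticFunction.moebius n : ℝ) *
      ∑ k ∈ Finset.Icc 1 (N / n), g (n * k) =
      ∑ m ∈ Finset.Icc 1 N, if n ∣ m then (ArithmeticFunction.moebius n : ℝ) * g m else 0 := by
    intro n hn
    rw [Finset.mem_Icc] at hn
    rw [← Finset.sum_filter, Finset.mul_sum]
    refine Finset.sum_bij (fun k _ => n * k) ?_ ?_ ?_ ?_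
    · intro k hk
      simp only [Finset.mem_filter, Finset.mem_Icc] at hk ⊢
      refine ⟨⟨Nat.mul_pos hn.1 hk.1, ?_⟩, dvd_mul_right _ _⟩
      exact (Nat.mul_le_mul_left n hk.2).trans (Nat.mul_div_le N n)
    · intro a _ b _ hab
      exact Nat.eq_of_mul_eq_mul_left hn.1 hab
    · intro m hm
      simp only [Finset.mem_filter, Finset.mem_Icc] at hm
      obtain ⟨⟨h1, h2⟩, k, rfl⟩ := hm
      refine ⟨k, ?_, rfl⟩
      rw [Finset.mem_Icc]
      exact ⟨Nat.pos_of_mul_pos_left h1, (Nat.le_div_iff_mul_le hn.1).2 (by rwa [mul_comm])⟩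
    · intros; rfl
  rw [Finset.sum_congr rfl h1, Finset.sum_comm]
  have h2 : ∀ m ∈ Finset.Icc 1 N,
      (∑ n ∈ Finset.Icc 1 N, if n ∣ m then (ArithmeticFunction.moebius n : ℝ) * g m else 0)
      = if m = 1 then g m else 0 := by
    intro m hm
    rw [Finset.mem_Icc] at hm
    have hd : (Finset.Icc 1 N).filter (· ∣ m) = m.divisors := by
      ext d
      simp only [Finset.mem_filter, Finset.mem_Icc, Nat.mem_divisors]
      constructor
      · rintro ⟨_, h⟩; exact ⟨h, by omega⟩
      · rintro ⟨h, _⟩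
        exact ⟨⟨Nat.pos_of_dvd_of_pos h hm.1, (Nat.le_of_dvd hm.1 h).trans hm.2⟩, h⟩
    rw [← Finset.sum_filter, hd, ← Finset.sum_mul]
    have := congrArg (fun f => f m) (ArithmeticFunction.coe_zeta_mul_coe_moebius (R := ℝ))
    simp only [ArithmeticFunction.coe_zeta_mul_apply, ArithmeticFunction.one_apply] at this
    simp only [ArithmeticFunction.intCoe_apply] at this
    rw [this]
    split_ifs <;> simp
  rw [Finset.sum_congr rfl h2, Finset.sum_ite_eq']
  simp [hN]

lemma aux_step_up (a : ℕ → ℝ) (φ : ℝ → ℝ) (x : ℝ) (hx : 1 ≤ x)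
    (hφ : IntervalIntegrable φ volume 1 x) :
    IntervalIntegrable (fun t => (∑ n ∈ Finset.Icc 1 ⌊t⌋₊, a n) * φ t) volume 1 x ∧
    ∫ t in (1:ℝ)..x, (∑ n ∈ Finset.Icc 1 ⌊t⌋₊, a n) * φ t =
      ∑ n ∈ Finset.Icc 1 ⌊x⌋₊, a n * ∫ t in (n:ℝ)..x, φ t := by
  have key : ∀ t ∈ Set.Ioc 1 x, (∑ n ∈ Finset.Icc 1 ⌊t⌋₊, a n) * φ t =
      ∑ n ∈ Finset.Icc 1 ⌊x⌋₊, a n * (Set.Ici (n:ℝ)).indicator φ t := by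
    intro t ht
    have : Finset.Icc 1 ⌊t⌋₊ = (Finset.Icc 1 ⌊x⌋₊).filter (fun n : ℕ => (n:ℝ) ≤ t) := by
      ext n
      simp only [Finset.mem_filter, Finset.mem_Icc]
      rw [Nat.le_floor_iff (by linarith [ht.1]), Nat.le_floor_iff (by linarith)]
      constructor
      · rintro ⟨h1, h2⟩; exact ⟨⟨h1, h2.trans ht.2⟩, h2⟩
      · rintro ⟨⟨h1, _⟩, h2⟩; exact ⟨h1, h2⟩
    rw [this, Finset.sum_filter, Finset.sum_mul]
    refine Finset.sum_congr rfl fun n _ => ?_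
    by_cases h : (n:ℝ) ≤ t <;> simp [h]
  have hφ' := (intervalIntegrable_iff_integrableOn_Ioc_of_le hx).1 hφ
  have hi : ∀ n : ℕ, IntegrableOn (fun t => a n * (Set.Ici (n:ℝ)).indicator φ t)
      (Set.Ioc 1 x) := fun n => (hφ'.indicator measurableSet_Ici).const_mul _
  constructor
  · rw [intervalIntegrable_iff_integrableOn_Ioc_of_le hx]
    refine IntegrableOn.congr_fun (f := fun t => ∑ n ∈ Finset.Icc 1 ⌊x⌋₊,
      a n * (Set.Ici (n:ℝ)).indicator φ t) ?_ (fun t ht => (key t ht).symm) measurableSet_Ioc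
    exact integrable_finsetSum _ fun n _ => hi n
  · rw [intervalIntegral.integral_of_le hx, setIntegral_congr_fun measurableSet_Ioc key,
      integral_finsetSum _ fun n _ => hi n]
    refine Finset.sum_congr rfl fun n hn => ?_
    rw [Finset.mem_Icc, Nat.le_floor_iff (by linarith)] at hn
    have hn1 : (1:ℝ) ≤ n := by exact_mod_cast hn.1
    rw [integral_const_mul]
    congr 1
    rw [integral_congr_ae (g := (Set.Ioi (n:ℝ)).indicator φ)
      (ae_restrict_of_ae (indicator_ae_eq_of_ae_eq_set Ioi_ae_eq_Ici.symm)),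
      setIntegral_indicator measurableSet_Ioi, intervalIntegral.integral_of_le hn.2,
      Set.Ioc_inter_Ioi, sup_eq_right.2 hn1]

lemma aux_step_down (a : ℕ → ℝ) (φ : ℝ → ℝ) (s x : ℝ) (hs : 1 ≤ s) (hx : s ≤ x)
    (hφ : IntervalIntegrable φ volume s x) :
    IntervalIntegrable (fun t => (∑ n ∈ Finset.Icc 1 ⌊x / t⌋₊, a n) * φ t) volume s x ∧
    ∫ t in s..x, (∑ n ∈ Finset.Icc 1 ⌊x / t⌋₊, a n) * φ t =
      ∑ n ∈ Finset.Icc 1 ⌊x / s⌋₊, a n * ∫ t in s..(x / n), φ t := by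
  have key : ∀ t ∈ Set.Ioc s x, (∑ n ∈ Finset.Icc 1 ⌊x / t⌋₊, a n) * φ t =
      ∑ n ∈ Finset.Icc 1 ⌊x / s⌋₊, a n * (Set.Iic (x / n)).indicator φ t := by
    intro t ht
    have ht0 : 0 < t := by linarith [ht.1]
    have : Finset.Icc 1 ⌊x / t⌋₊ = (Finset.Icc 1 ⌊x / s⌋₊).filter (fun n : ℕ => t ≤ x / n) := by
      ext n
      simp only [Finset.mem_filter, Finset.mem_Icc]
      rw [Nat.le_floor_iff (by apply div_nonneg <;> linarith),
        Nat.le_floor_iff (by apply div_nonneg <;> linarith)]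
      have hc : 1 ≤ n → ((n:ℝ) ≤ x / t ↔ t ≤ x / n) := by
        intro h
        rw [le_div_iff₀ ht0, le_div_iff₀ (by exact_mod_cast h), mul_comm]
      constructor
      · rintro ⟨h1, h2⟩
        refine ⟨⟨h1, h2.trans ?_⟩, (hc h1).1 h2⟩
        apply div_le_div_of_nonneg_left <;> linarith [ht.1]
      · rintro ⟨⟨h1, _⟩, h2⟩; exact ⟨h1, (hc h1).2 h2⟩
    rw [this, Finset.sum_filter, Finset.sum_mul]
    refine Finset.sum_congr rfl fun n _ => ?_
    by_cases h : t ≤ x / n <;> simp [h]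
  have hφ' := (intervalIntegrable_iff_integrableOn_Ioc_of_le hx).1 hφ
  have hi : ∀ n : ℕ, IntegrableOn (fun t => a n * (Set.Iic (x / n)).indicator φ t)
      (Set.Ioc s x) := fun n => (hφ'.indicator measurableSet_Iic).const_mul _
  constructor
  · rw [intervalIntegrable_iff_integrableOn_Ioc_of_le hx]
    refine IntegrableOn.congr_fun (f := fun t => ∑ n ∈ Finset.Icc 1 ⌊x / s⌋₊,
      a n * (Set.Iic (x / n)).indicator φ t) ?_ (fun t ht => (key t ht).symm) measurableSet_Ioc
    exact integrable_finsetSum _ fun n _ => hi n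
  · rw [intervalIntegral.integral_of_le hx, setIntegral_congr_fun measurableSet_Ioc key,
      integral_finsetSum _ fun n _ => hi n]
    refine Finset.sum_congr rfl fun n hn => ?_
    rw [Finset.mem_Icc, Nat.le_floor_iff (by apply div_nonneg <;> linarith)] at hn
    have hn1 : (1:ℝ) ≤ n := by exact_mod_cast hn.1
    have h2 : s ≤ x / n := by
      rw [le_div_iff₀ (by linarith), mul_comm, ← le_div_iff₀ (by linarith)]; exact hn.2
    have h3 : x / n ≤ x := div_le_self (by linarith) hn1
    rw [integral_const_mul]
    congr 1
    rw [setIntegral_indicator measurableSet_Iic, intervalIntegral.integral_of_le h2,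
      Set.Ioc_inter_Iic, inf_eq_right.2 h3]

lemma aux_int_sq (x s r : ℝ) (hs : 0 < s) (hr : s ≤ r) :
    ∫ t in s..r, x / t ^ 2 = x / s - x / r := by
  have hc : ∀ t ∈ Set.uIcc s r, 0 < t := by
    intro t ht; rw [Set.uIcc_of_le hr] at ht; linarith [ht.1]
  rw [intervalIntegral.integral_eq_sub_of_hasDerivAt (f := fun t => -(x / t))]
  · ring
  · intro t ht
    have h := ((hasDerivAt_inv (hc t ht).ne').const_mul x).neg
    refine h.congr_deriv ?_
    field_simp
  · apply ContinuousOn.intervalIntegrable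
    apply ContinuousOn.div continuousOn_const (by fun_prop)
    intro t ht; have := hc t ht; positivity

lemma aux_int_log (x s : ℝ) (hs : 0 < s) (hr : s ≤ x) :
    IntervalIntegrable (fun t => x / t ^ 2 * (Real.log (x / t) + 1)) volume s x ∧
    ∫ t in s..x, x / t ^ 2 * (Real.log (x / t) + 1) = x / s * Real.log (x / s) := by
  have hc : ∀ t ∈ Set.uIcc s x, 0 < t := by
    intro t ht; rw [Set.uIcc_of_le hr] at ht; linarith [ht.1]
  have hx : 0 < x := by linarith
  have hi : IntervalIntegrable (fun t => x / t ^ 2 * (Real.log (x / t) + 1)) volume s x := by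
    apply ContinuousOn.intervalIntegrable
    apply ContinuousOn.mul
    · apply ContinuousOn.div continuousOn_const (by fun_prop)
      intro t ht; have := hc t ht; positivity
    · apply ContinuousOn.add _ continuousOn_const
      apply ContinuousOn.log
      · apply ContinuousOn.div continuousOn_const (by fun_prop)
        intro t ht; exact (hc t ht).ne'
      · intro t ht; have := hc t ht; positivity
  refine ⟨hi, ?_⟩
  rw [intervalIntegral.integral_eq_sub_of_hasDerivAt
    (f := fun t => -(x / t * Real.log (x / t))) _ hi]
  · simp [div_self hx.ne']
  · intro t ht
    have ht0 := hc t ht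
    have h1 : HasDerivAt (fun t => x / t) (-(x / t ^ 2)) t := by
      have h := (hasDerivAt_inv ht0.ne').const_mul x
      refine h.congr_deriv ?_
      field_simp
    have h := (h1.mul (h1.log (by positivity))).neg
    refine h.congr_deriv ?_
    field_simp
    ring

/-- the function inverted by Möbius inversion -/
noncomputable def auxh (y : ℝ) : ℝ :=
  y - (2 * Real.eulerMascheroniConstant - 1) - 2 * (1 - Real.eulerMascheroniConstant) / y

lemma auxF_integral (s x : ℝ) (hs : 1 ≤ s) (hx : s ≤ x) :
    IntervalIntegrable (fun t => auxF (x / t) / t) volume s x ∧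
    ∫ t in s..x, auxF (x / t) / t = x / s * Real.log (x / s)
      - ∑ k ∈ Finset.Icc 1 ⌊x / s⌋₊, auxh (x / (s * k)) := by
  have hs0 : 0 < s := by linarith
  have hx0 : 0 < x := by linarith
  obtain ⟨i1, e1⟩ := aux_int_log x s hs0 hx
  have hsq : IntervalIntegrable (fun t => x / t ^ 2) volume s x := by
    apply ContinuousOn.intervalIntegrable
    apply ContinuousOn.div continuousOn_const (by fun_prop)
    intro t ht
    rw [Set.uIcc_of_le hx] at ht
    have : 0 < t := by linarith [ht.1]
    positivity
  obtain ⟨i2, e2⟩ := aux_step_down (fun k => 1 / (k:ℝ)) (fun t => x / t ^ 2) s x hs hx hsq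
  obtain ⟨i3, e3⟩ := aux_step_down (fun k => (k:ℝ))
    (fun _ => 2 * (1 - Real.eulerMascheroniConstant) / x) s x hs hx intervalIntegrable_const
  have hEq : ∀ t ∈ Set.Ioc s x, auxF (x / t) / t = x / t ^ 2 * (Real.log (x / t) + 1)
      - (∑ k ∈ Finset.Icc 1 ⌊x / t⌋₊, 1 / (k:ℝ)) * (x / t ^ 2)
      - (∑ k ∈ Finset.Icc 1 ⌊x / t⌋₊, (k:ℝ)) *
        (2 * (1 - Real.eulerMascheroniConstant) / x) := by
    intro t ht
    have : 0 < t := by linarith [ht.1]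
    unfold auxF
    generalize (∑ k ∈ Finset.Icc 1 ⌊x / t⌋₊, 1 / (k:ℝ)) = A
    generalize (∑ k ∈ Finset.Icc 1 ⌊x / t⌋₊, (k:ℝ)) = B
    field_simp
  constructor
  · refine ((i1.sub i2).sub i3).congr ?_
    rw [Set.uIoc_of_le hx]
    intro t ht
    exact (hEq t ht).symm
  · rw [intervalIntegral.integral_of_le hx, setIntegral_congr_fun measurableSet_Ioc hEq,
      ← intervalIntegral.integral_of_le hx,
      intervalIntegral.integral_sub (i1.sub i2) i3, intervalIntegral.integral_sub i1 i2,
      e1, e2, e3, sub_sub, ← Finset.sum_add_distrib]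
    congr 1
    refine Finset.sum_congr rfl fun k hk => ?_
    rw [Finset.mem_Icc, Nat.le_floor_iff (by positivity)] at hk
    have hk1 : (1:ℝ) ≤ k := by exact_mod_cast hk.1
    have h2 : s ≤ x / k := by
      rw [le_div_iff₀ (by linarith), mul_comm, ← le_div_iff₀ (by linarith)]; exact hk.2
    rw [aux_int_sq x s _ hs0 h2, intervalIntegral.integral_const]
    unfold auxh
    simp only [smul_eq_mul]
    field_simp
    ring

lemma aux_m_integral (x : ℝ) (hx : 1 ≤ x) :
    ∫ t in (1 : ℝ)..x, Mobius_m t / t =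
      ∑ n ∈ Finset.Icc 1 ⌊x⌋₊, (ArithmeticFunction.moebius n : ℝ) / n * Real.log (x / n) := by
  have hi : IntervalIntegrable (fun t : ℝ => t⁻¹) volume 1 x := by
    apply ContinuousOn.intervalIntegrable
    apply ContinuousOn.inv₀ continuousOn_id
    intro t ht
    rw [Set.uIcc_of_le hx] at ht
    have : 0 < t := by linarith [ht.1]
    exact this.ne'
  have h := (aux_step_up (fun n => (ArithmeticFunction.moebius n : ℝ) / n) _ x hx hi).2
  simp only [Mobius_m, div_eq_mul_inv] at h ⊢
  rw [h]
  refine Finset.sum_congr rfl fun n hn => ?_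
  rw [Finset.mem_Icc] at hn
  have hn1 : (0:ℝ) < n := by exact_mod_cast hn.1
  rw [integral_inv_of_pos hn1 (by linarith), div_eq_mul_inv]

lemma aux_M_abs_integrable (x : ℝ) (hx : 1 ≤ x) :
    IntervalIntegrable (fun t => |Mobius_M t| / t) volume 1 x := by
  have hi : IntervalIntegrable (fun t : ℝ => t⁻¹) volume 1 x := by
    apply ContinuousOn.intervalIntegrable
    apply ContinuousOn.inv₀ continuousOn_id
    intro t ht
    rw [Set.uIcc_of_le hx] at ht
    have : 0 < t := by linarith [ht.1]
    exact this.ne'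
  have h := (aux_step_up (fun n => (ArithmeticFunction.moebius n : ℝ)) _ x hx hi).1.abs
  refine h.congr ?_
  rw [Set.uIoc_of_le hx]
  intro t ht
  have : 0 < t := by linarith [ht.1]
  simp only [Mobius_M, abs_mul, abs_inv, abs_of_pos this, div_eq_mul_inv]

lemma aux_identity (x : ℝ) (hx : 1 ≤ x) :
    x * ∫ t in (1 : ℝ)..x, Mobius_m t / t =
      auxh x + ∫ t in (1 : ℝ)..x, Mobius_M t * (auxF (x / t) / t) := by
  have h := (aux_step_up (fun n => (ArithmeticFunction.moebius n : ℝ)) _ x hx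
    (auxF_integral 1 x le_rfl hx).1).2
  have hN : 1 ≤ ⌊x⌋₊ := Nat.one_le_floor_iff x |>.2 hx
  have hinv := aux_mobius_inv ⌊x⌋₊ hN (fun m => auxh (x / m))
  rw [aux_m_integral x hx]
  simp only [Mobius_M]
  rw [h]
  simp only [Nat.cast_one, div_one] at hinv
  rw [← hinv, ← Finset.sum_add_distrib, Finset.mul_sum]
  refine Finset.sum_congr rfl fun n hn => ?_
  rw [Finset.mem_Icc, Nat.le_floor_iff (by linarith)] at hn
  have hn1 : (1:ℝ) ≤ n := by exact_mod_cast hn.1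
  rw [(auxF_integral n x hn1 hn.2).2, Nat.floor_div_natCast]
  push_cast
  ring

/-- For every real `x ≥ 1`,
`|-1 + ∫_1^x m(t)/t dt| ≤ 1/x + (1/x) ∫_1^x |M(t)|/t dt`. -/
theorem integral_m_bound (x : ℝ) (hx : 1 ≤ x) :
    |(-1 : ℝ) + ∫ t in (1 : ℝ)..x, Mobius_m t / t|
      ≤ 1 / x + (1 / x) * ∫ t in (1 : ℝ)..x, |Mobius_M t| / t := by
  have hx0 : 0 < x := by linarith
  have hid := aux_identity x hx
  have hb : |∫ t in (1 : ℝ)..x, Mobius_M t * (auxF (x / t) / t)| ≤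
      ∫ t in (1 : ℝ)..x, |Mobius_M t| / t := by
    rw [← Real.norm_eq_abs]
    refine intervalIntegral.norm_integral_le_of_norm_le hx ?_ (aux_M_abs_integrable x hx)
    refine Filter.Eventually.of_forall fun t ht => ?_
    have ht0 : 0 < t := by linarith [ht.1]
    have hF := auxF_bound (x / t) (by rw [le_div_iff₀ ht0]; linarith [ht.2])
    rw [Real.norm_eq_abs, abs_mul, abs_div, abs_of_pos ht0, ← mul_div_assoc]
    gcongr
    exact mul_le_of_le_one_right (abs_nonneg _) hF
  have hh : |auxh x - x| ≤ 1 := by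
    have hg := Real.one_half_lt_eulerMascheroniConstant
    have hg2 := Real.eulerMascheroniConstant_lt_two_thirds
    have h1 : 2 * (1 - Real.eulerMascheroniConstant) / x ≤
        2 * (1 - Real.eulerMascheroniConstant) := div_le_self (by linarith) hx
    have h2 : 0 ≤ 2 * (1 - Real.eulerMascheroniConstant) / x :=
      div_nonneg (by linarith) hx0.le
    unfold auxh
    rw [abs_le]
    constructor <;> linarith
  have e : (-1 : ℝ) + ∫ t in (1 : ℝ)..x, Mobius_m t / t =
      (1 / x) * ((auxh x - x) + ∫ t in (1 : ℝ)..x, Mobius_M t * (auxF (x / t) / t)) := by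
    have : (auxh x - x) + ∫ t in (1 : ℝ)..x, Mobius_M t * (auxF (x / t) / t) =
        x * ((-1 : ℝ) + ∫ t in (1 : ℝ)..x, Mobius_m t / t) := by linarith
    rw [this]
    field_simp
  rw [e, abs_mul, abs_of_pos (by positivity : 0 < 1 / x)]
  have := (abs_add_le (auxh x - x)
    (∫ t in (1 : ℝ)..x, Mobius_M t * (auxF (x / t) / t))).trans (add_le_add hh hb)
  calc _ ≤ (1 / x) * (1 + ∫ t in (1 : ℝ)..x, |Mobius_M t| / t) := by gcongr
    _ = _ := by ring
end
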